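/- On an open subset of ℝ³ with coordinates (x¹, x², x³) = (x, y, z), let the metric be given by g = (dz + β₁dx¹ + β₂dx²)² + h_{ab}dx^adx^b, i.e. g_{33} = 1, g_{a3} = g_{3a} = β_a and g_{ab} = h_{ab} + β_aβ_b for a,b ∈ {1,2}, where β₁, β₂ are smooth functions of (x¹,x²) only and (h_{ab}) is a smooth positive-definite 2×2 matrix-valued function with ∂_z det(h_{ab}) = 0. Let c ∈ ℝ and define the symmetric tensor field T^{ij} := c·(δ^i_z δ^j_z − (1/3)g^{ij}). Then T is trace-free, g_{ij}T^{ij} = 0, and T satisfies the momentum constraint ∇_j T^{ij} = 0. -/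

import Mathlib

open Matrix

noncomputable section

abbrev V3 := Fin 3 → ℝ

/-- Partial derivative `∂ᵢ f` on `ℝ³`. -/
def pd (i : Fin 3) (f : V3 → ℝ) (x : V3) : ℝ := fderiv ℝ f x (Pi.single i 1)

/-- Christoffel symbols `Γ^i_{jk} = (1/2) g^{il}(∂_j g_{lk} + ∂_k g_{jl} - ∂_l g_{jk})`. -/
def christoffel (g : V3 → Matrix (Fin 3) (Fin 3) ℝ) (i j k : Fin 3) (x : V3) : ℝ :=
  (1 / 2) * ∑ l, (g x)⁻¹ i l *
    (pd j (fun y => g y l k) x + pd k (fun y => g y j l) x - pd l (fun y => g y j k) x)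

/-- `|g| = (det g)^{1/2}`. -/
def sqrtDet (g : V3 → Matrix (Fin 3) (Fin 3) ℝ) (x : V3) : ℝ := Real.sqrt (g x).det

/-- Covariant divergence of a contravariant symmetric 2-tensor:
`∇_j T^{ij} = |g|⁻¹ ∂_j(|g| T^{ij}) + Γ^i_{jk} T^{jk}`. -/
def covDivUp (g T : V3 → Matrix (Fin 3) (Fin 3) ℝ) (i : Fin 3) (x : V3) : ℝ :=
  (sqrtDet g x)⁻¹ * (∑ j, pd j (fun y => sqrtDet g y * T y i j) x) +
    ∑ j, ∑ k, christoffel g i j k x * T x j k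

/-- Covariant divergence in mixed form, for a contravariant tensor `T^{ij}`:
`∇_j T_i^{ j} = |g|⁻¹ ∂_j(|g| g_{ik} T^{kj}) - (1/2) T^{jk} ∂_i g_{jk}`. -/
def covDivLow (g T : V3 → Matrix (Fin 3) (Fin 3) ℝ) (i : Fin 3) (x : V3) : ℝ :=
  (sqrtDet g x)⁻¹ * (∑ j, pd j (fun y => sqrtDet g y * (∑ k, g y i k * T y k j)) x) -
    (1 / 2) * ∑ j, ∑ k, T x j k * pd i (fun y => g y j k) x

/-!
The divergence of `T = c (∂_z ⊗ ∂_z - (1/3) g⁻¹)` splits into two pieces that vanish separately. The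
inverse metric is divergence-free for every metric: by Jacobi's formula
`∂ⱼ |g| = (1/2) |g| tr (g⁻¹ ∂ⱼg)` and by `∂ⱼ g⁻¹ = -g⁻¹ (∂ⱼg) g⁻¹`, the two terms of the covariant
divergence cancel. The divergence of `∂_z ⊗ ∂_z` is `|g|⁻¹ (∂_z |g|) ∂_z + Γⁱ_{zz} ∂ᵢ`. Its first
term vanishes because `det g = det h` does not depend on `z`, its second because `g_{zz} = 1` and
`∂_z g_{iz} = 0`, so that the `z`-lines are geodesics. The trace of `T` is `c (g_{zz} - 1) = 0`.
-/

open Filter Topology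

section MatrixCalculus

variable {𝕜 E n : Type*} [NontriviallyNormedField 𝕜] [NormedAddCommGroup E] [NormedSpace 𝕜 E]
  [Fintype n] [DecidableEq n] {A : E → Matrix n n 𝕜} {x : E}

theorem det_updateRow_eq_sum_adjugate {R : Type*} [CommRing R] (B : Matrix n n R) (i : n)
    (v : n → R) : (B.updateRow i v).det = ∑ j, B.adjugate j i * v j :=
  calc (B.updateRow i v).det
      = (B.adjugateᵀ *ᵥ v) i := by
        rw [← cramer_transpose_apply, cramer_eq_adjugate_mulVec, adjugate_transpose]
    _ = ∑ j, B.adjugate j i * v j := rfl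

-- Jacobi's formula, read off from the multilinearity of the determinant in the rows.
theorem hasFDerivAt_det {A' : n → n → E →L[𝕜] 𝕜}
    (hA : ∀ i j, HasFDerivAt (fun y => A y i j) (A' i j) x) :
    HasFDerivAt (fun y => (A y).det) (∑ i, ∑ j, (A x).adjugate j i • A' i j) x := by
  let detRows : ContinuousMultilinearMap 𝕜 (fun _ : n => n → 𝕜) 𝕜 :=
    { (detRowAlternating (n := n) (R := 𝕜)).toMultilinearMap with
      cont := Continuous.matrix_det continuous_id }
  have hrows : HasFDerivAt (fun y i j => A y i j)
      (ContinuousLinearMap.pi fun i => ContinuousLinearMap.pi (A' i)) x :=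
    hasFDerivAt_pi.2 fun i => hasFDerivAt_pi.2 (hA i)
  refine ((detRows.hasFDerivAt (A x)).comp x hrows).congr_fderiv ?_
  ext v
  calc detRows.linearDeriv (A x) (fun i j => A' i j v)
      = ∑ i, ((A x).updateRow i fun j => A' i j v).det :=
        detRows.linearDeriv_apply (A x) fun i j => A' i j v
    _ = (∑ i, ∑ j, (A x).adjugate j i • A' i j) v := by
        simp [det_updateRow_eq_sum_adjugate]

theorem differentiableAt_det (hA : ∀ i j, DifferentiableAt 𝕜 (fun y => A y i j) x) :
    DifferentiableAt 𝕜 (fun y => (A y).det) x :=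
  (hasFDerivAt_det fun i j => (hA i j).hasFDerivAt).differentiableAt

theorem differentiableAt_adjugate_apply (hA : ∀ i j, DifferentiableAt 𝕜 (fun y => A y i j) x)
    (i j : n) : DifferentiableAt 𝕜 (fun y => (A y).adjugate i j) x := by
  simp only [adjugate_apply]
  refine differentiableAt_det fun k l => ?_
  by_cases hk : k = j
  · simp [hk]
  · simpa [updateRow_ne hk] using hA k l

theorem differentiableAt_inv_apply (hA : ∀ i j, DifferentiableAt 𝕜 (fun y => A y i j) x)
    (hdet : (A x).det ≠ 0) (i j : n) : DifferentiableAt 𝕜 (fun y => (A y)⁻¹ i j) x := by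
  simp only [inv_def, Ring.inverse_eq_inv', Matrix.smul_apply, smul_eq_mul]
  exact ((differentiableAt_det hA).inv hdet).mul (differentiableAt_adjugate_apply hA i j)

end MatrixCalculus

section PartialDerivatives

variable {f f' : V3 → ℝ} {x : V3}

theorem pd_const (i : Fin 3) (c : ℝ) (x : V3) : pd i (fun _ => c) x = 0 := by
  simp [pd]

theorem pd_sub (i : Fin 3) (hf : DifferentiableAt ℝ f x) (hf' : DifferentiableAt ℝ f' x) :
    pd i (fun y => f y - f' y) x = pd i f x - pd i f' x := by
  simp [pd, fderiv_fun_sub hf hf']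

theorem pd_mul (i : Fin 3) (hf : DifferentiableAt ℝ f x) (hf' : DifferentiableAt ℝ f' x) :
    pd i (fun y => f y * f' y) x = pd i f x * f' x + f x * pd i f' x := by
  simp only [pd, fderiv_fun_mul hf hf', _root_.add_apply,
    _root_.smul_apply, smul_eq_mul]
  ring

theorem pd_const_mul (i : Fin 3) (c : ℝ) (hf : DifferentiableAt ℝ f x) :
    pd i (fun y => c * f y) x = c * pd i f x := by
  simp [pd, fderiv_const_mul hf c]

theorem pd_eq_zero_of_update_eq {i : Fin 3} (hf : DifferentiableAt ℝ f x)
    (hind : ∀ t, f (Function.update x i t) = f x) : pd i f x = 0 := by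
  have hderiv : HasDerivAt (f ∘ Function.update x i) (pd i f x) (x i) :=
    HasFDerivAt.comp_hasDerivAt (x i) (by simpa using hf.hasFDerivAt) (hasDerivAt_update x i (x i))
  have hconst : f ∘ Function.update x i = fun _ => f x := funext hind
  exact hderiv.unique (hconst ▸ hasDerivAt_const (x i) (f x))

variable {l m n : Type*}

/-- The entrywise partial derivative `∂ᵢA` of a matrix-valued field `A`. -/
def pdMatrix (i : Fin 3) (A : V3 → Matrix m n ℝ) (x : V3) : Matrix m n ℝ :=
  Matrix.of fun a b => pd i (fun y => A y a b) x

theorem pdMatrix_apply (i : Fin 3) (A : V3 → Matrix m n ℝ) (x : V3) (a : m) (b : n) :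
    pdMatrix i A x a b = pd i (fun y => A y a b) x :=
  rfl

theorem pdMatrix_isSymm (i : Fin 3) {A : V3 → Matrix n n ℝ} (hA : ∀ᶠ y in 𝓝 x, (A y).IsSymm) :
    (pdMatrix i A x).IsSymm := by
  refine IsSymm.ext fun a b => ?_
  have hab : (fun y => A y b a) =ᶠ[𝓝 x] fun y => A y a b := hA.mono fun y hy => hy.apply a b
  simp only [pdMatrix_apply, pd, hab.fderiv_eq]

variable [Fintype n]

theorem pdMatrix_mul (i : Fin 3) {A : V3 → Matrix l n ℝ} {B : V3 → Matrix n m ℝ}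
    (hA : ∀ a b, DifferentiableAt ℝ (fun y => A y a b) x)
    (hB : ∀ a b, DifferentiableAt ℝ (fun y => B y a b) x) :
    pdMatrix i (fun y => A y * B y) x = pdMatrix i A x * B x + A x * pdMatrix i B x := by
  ext a b
  have hsum : pd i (fun y => ∑ k, A y a k * B y k b) x
      = ∑ k, pd i (fun y => A y a k * B y k b) x := by
    simp [pd, fderiv_fun_sum fun k _ => (hA a k).fun_mul (hB k b)]
  simp only [pdMatrix_apply, mul_apply, Matrix.add_apply, hsum, pd_mul i (hA a _) (hB _ b),
    Finset.sum_add_distrib]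

variable [DecidableEq n] {A : V3 → Matrix n n ℝ}

theorem pdMatrix_inv (i : Fin 3) (hA : ∀ a b, DifferentiableAt ℝ (fun y => A y a b) x)
    (hdet : (A x).det ≠ 0) :
    pdMatrix i (fun y => (A y)⁻¹) x = -((A x)⁻¹ * pdMatrix i A x * (A x)⁻¹) := by
  have hunit : IsUnit (A x).det := hdet.isUnit
  have hone : (fun y => A y * (A y)⁻¹) =ᶠ[𝓝 x] fun _ => 1 :=
    ((differentiableAt_det hA).continuousAt.eventually_ne hdet).mono
      fun y hy => mul_nonsing_inv (A y) hy.isUnit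
  have hzero : pdMatrix i A x * (A x)⁻¹ + A x * pdMatrix i (fun y => (A y)⁻¹) x = 0 := by
    rw [← pdMatrix_mul i hA (differentiableAt_inv_apply hA hdet)]
    ext a b
    have hab : (fun y => (A y * (A y)⁻¹) a b) =ᶠ[𝓝 x] fun _ => (1 : Matrix n n ℝ) a b :=
      hone.mono fun y hy => congrFun₂ hy a b
    simp [pdMatrix_apply, pd, hab.fderiv_eq]
  calc pdMatrix i (fun y => (A y)⁻¹) x
      = (A x)⁻¹ * (A x * pdMatrix i (fun y => (A y)⁻¹) x) :=
        (nonsing_inv_mul_cancel_left (A x) _ hunit).symm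
    _ = -((A x)⁻¹ * pdMatrix i A x * (A x)⁻¹) := by
        rw [eq_neg_of_add_eq_zero_right hzero, Matrix.mul_neg, Matrix.mul_assoc]

theorem pd_det (i : Fin 3) (hA : ∀ a b, DifferentiableAt ℝ (fun y => A y a b) x)
    (hdet : (A x).det ≠ 0) :
    pd i (fun y => (A y).det) x = (A x).det * ((A x)⁻¹ * pdMatrix i A x).trace := by
  have hadj : (A x).adjugate = (A x).det • (A x)⁻¹ := by
    rw [inv_def, Ring.inverse_eq_inv', smul_smul, mul_inv_cancel₀ hdet, one_smul]
  calc pd i (fun y => (A y).det) x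
      = ∑ a, ∑ b, (A x).adjugate b a * pdMatrix i A x a b := by
        simp [pd, pdMatrix_apply, (hasFDerivAt_det fun a b => (hA a b).hasFDerivAt).fderiv]
    _ = ((A x).adjugate * pdMatrix i A x).trace := by
        rw [Finset.sum_comm]
        rfl
    _ = (A x).det * ((A x)⁻¹ * pdMatrix i A x).trace := by
        rw [hadj, Matrix.smul_mul, trace_smul, smul_eq_mul]

end PartialDerivatives

section CovariantDivergence

variable {g S T : V3 → Matrix (Fin 3) (Fin 3) ℝ} {x : V3}

theorem differentiableAt_sqrtDet (hg : ∀ a b, DifferentiableAt ℝ (fun y => g y a b) x)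
    (hdet : (g x).det ≠ 0) : DifferentiableAt ℝ (sqrtDet g) x :=
  (differentiableAt_det hg).sqrt hdet

theorem pd_sqrtDet (i : Fin 3) (hg : ∀ a b, DifferentiableAt ℝ (fun y => g y a b) x)
    (hdet : (g x).det ≠ 0) :
    pd i (sqrtDet g) x = pd i (fun y => (g y).det) x / (2 * sqrtDet g x) := by
  have hfderiv : fderiv ℝ (sqrtDet g) x = _ := fderiv_sqrt (differentiableAt_det hg) hdet
  simp only [pd, hfderiv, sqrtDet, _root_.smul_apply, smul_eq_mul]
  ring

theorem inv_sqrtDet_mul_pd (i : Fin 3) {f : V3 → ℝ}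
    (hg : ∀ a b, DifferentiableAt ℝ (fun y => g y a b) x) (hdet : 0 < (g x).det)
    (hf : DifferentiableAt ℝ f x) :
    (sqrtDet g x)⁻¹ * pd i (fun y => sqrtDet g y * f y) x
      = pd i f x + 1 / 2 * f x * ((g x)⁻¹ * pdMatrix i g x).trace := by
  have hpos : 0 < sqrtDet g x := Real.sqrt_pos.2 hdet
  have hsq : (g x).det = sqrtDet g x ^ 2 := (Real.sq_sqrt hdet.le).symm
  rw [pd_mul i (differentiableAt_sqrtDet hg hdet.ne') hf, pd_sqrtDet i hg hdet.ne',
    pd_det i hg hdet.ne', hsq]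
  field_simp
  ring

theorem covDivUp_sub (i : Fin 3) (hg : ∀ a b, DifferentiableAt ℝ (fun y => g y a b) x)
    (hdet : (g x).det ≠ 0) (hS : ∀ a b, DifferentiableAt ℝ (fun y => S y a b) x)
    (hT : ∀ a b, DifferentiableAt ℝ (fun y => T y a b) x) :
    covDivUp g (fun y => S y - T y) i x = covDivUp g S i x - covDivUp g T i x := by
  have hsqrt := differentiableAt_sqrtDet hg hdet
  simp only [covDivUp, Matrix.sub_apply, mul_sub,
    pd_sub _ (hsqrt.fun_mul (hS i _)) (hsqrt.fun_mul (hT i _)),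
    Finset.sum_sub_distrib]
  ring

theorem covDivUp_const_smul (i : Fin 3) (c : ℝ)
    (hg : ∀ a b, DifferentiableAt ℝ (fun y => g y a b) x) (hdet : (g x).det ≠ 0)
    (hT : ∀ a b, DifferentiableAt ℝ (fun y => T y a b) x) :
    covDivUp g (fun y => c • T y) i x = c * covDivUp g T i x := by
  have hsqrt := differentiableAt_sqrtDet hg hdet
  simp only [covDivUp, Matrix.smul_apply, smul_eq_mul, mul_left_comm _ c,
    pd_const_mul _ c (hsqrt.fun_mul (hT i _)), ← Finset.mul_sum, mul_add]

theorem sum_christoffel_mul_inv (i : Fin 3) (hsymm : ∀ᶠ y in 𝓝 x, (g y).IsSymm) :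
    ∑ j, ∑ k, christoffel g i j k x * (g x)⁻¹ j k
      = ∑ j, (((g x)⁻¹ * pdMatrix j g x * (g x)⁻¹) i j
          - 1 / 2 * (g x)⁻¹ i j * ((g x)⁻¹ * pdMatrix j g x).trace) := by
  set G := (g x)⁻¹ with hG
  have hGsymm : G.IsSymm := hsymm.self_of_nhds.inv
  have hDsymm (j : Fin 3) : (pdMatrix j g x).IsSymm := pdMatrix_isSymm j hsymm
  have hfirst : ∑ j, ∑ k, ∑ l, G i l * pdMatrix j g x l k * G j k
      = ∑ j, (G * pdMatrix j g x * G) i j := by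
    simp only [mul_apply, Finset.sum_mul, fun j k => hGsymm.apply k j]
  have hsecond : ∑ j, ∑ k, ∑ l, G i l * pdMatrix k g x j l * G j k
      = ∑ j, (G * pdMatrix j g x * G) i j := by
    rw [← hfirst, Finset.sum_comm]
    simp only [fun j k l => (hDsymm j).apply k l, fun j k => hGsymm.apply k j]
  have htrace (l : Fin 3) : (G * pdMatrix l g x).trace = ∑ j, ∑ k, pdMatrix l g x j k * G j k := by
    simp only [trace, diag_apply, mul_apply, fun j k => (hDsymm l).apply j k, mul_comm (G _ _)]
  have hthird : ∑ j, ∑ k, ∑ l, G i l * pdMatrix l g x j k * G j k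
      = ∑ l, G i l * (G * pdMatrix l g x).trace := by
    rw [Finset.sum_comm_cycle]
    simp only [htrace, Finset.mul_sum, mul_assoc]
  have hΓ (j k : Fin 3) : christoffel g i j k x * G j k
      = 1 / 2 * ∑ l, (G i l * pdMatrix j g x l k * G j k + G i l * pdMatrix k g x j l * G j k
          - G i l * pdMatrix l g x j k * G j k) := by
    simp only [christoffel, ← hG, mul_assoc, Finset.sum_mul, pdMatrix_apply]
    simp only [← mul_add, ← mul_sub, add_mul, sub_mul]
  simp only [hΓ, ← Finset.mul_sum, Finset.sum_add_distrib, Finset.sum_sub_distrib, hfirst, hsecond,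
    hthird, mul_assoc (1 / 2 : ℝ)]
  ring

theorem covDivUp_inv (i : Fin 3) (hg : ∀ a b, DifferentiableAt ℝ (fun y => g y a b) x)
    (hdet : 0 < (g x).det) (hsymm : ∀ᶠ y in 𝓝 x, (g y).IsSymm) :
    covDivUp g (fun y => (g y)⁻¹) i x = 0 := by
  have hinv := differentiableAt_inv_apply hg hdet.ne'
  have hpd (j : Fin 3) : pd j (fun y => (g y)⁻¹ i j) x
      = -((g x)⁻¹ * pdMatrix j g x * (g x)⁻¹) i j :=
    congrFun₂ (pdMatrix_inv j hg hdet.ne') i j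
  simp only [covDivUp, Finset.mul_sum, inv_sqrtDet_mul_pd _ hg hdet (hinv i _), hpd,
    sum_christoffel_mul_inv i hsymm, ← Finset.sum_add_distrib]
  exact Finset.sum_eq_zero fun j _ => by ring

theorem christoffel_self_eq_zero (i : Fin 3) {a : Fin 3} (hsymm : ∀ᶠ y in 𝓝 x, (g y).IsSymm)
    (hrow : ∀ l, pd a (fun y => g y l a) x = 0) (hdiag : ∀ l, pd l (fun y => g y a a) x = 0) :
    christoffel g i a a x = 0 := by
  have hcol (l : Fin 3) : pd a (fun y => g y a l) x = 0 :=
    ((pdMatrix_isSymm a hsymm).apply l a).trans (hrow l)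
  simp [christoffel, hrow, hcol, hdiag]

theorem covDivUp_single_self (i : Fin 3) {a : Fin 3}
    (hg : ∀ a b, DifferentiableAt ℝ (fun y => g y a b) x) (hdet : (g x).det ≠ 0)
    (hsymm : ∀ᶠ y in 𝓝 x, (g y).IsSymm) (hrow : ∀ l, pd a (fun y => g y l a) x = 0)
    (hdiag : ∀ l, pd l (fun y => g y a a) x = 0) (hvol : pd a (fun y => (g y).det) x = 0) :
    covDivUp g (fun _ => single a a 1) i x = 0 := by
  have hsqrt : pd a (sqrtDet g) x = 0 := by rw [pd_sqrtDet a hg hdet, hvol, zero_div]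
  have hflux (j : Fin 3) : pd j (fun y => sqrtDet g y * single a a 1 i j) x = 0 := by
    by_cases h : a = i ∧ a = j
    · obtain ⟨rfl, rfl⟩ := h
      simpa only [single_apply_same, mul_one] using hsqrt
    · simp [h, pd_const]
  have hgeodesic (j k : Fin 3) : christoffel g i j k x * single a a 1 j k = 0 := by
    by_cases h : a = j ∧ a = k
    · obtain ⟨rfl, rfl⟩ := h
      rw [christoffel_self_eq_zero i hsymm hrow hdiag, zero_mul]
    · rw [single_apply, if_neg h, mul_zero]
  simp [covDivUp, hflux, hgeodesic]

theorem covDivUp_smul_single_sub_smul_inv (i : Fin 3) {a : Fin 3} (c s : ℝ)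
    (hg : ∀ a b, DifferentiableAt ℝ (fun y => g y a b) x) (hdet : 0 < (g x).det)
    (hsymm : ∀ᶠ y in 𝓝 x, (g y).IsSymm) (hrow : ∀ l, pd a (fun y => g y l a) x = 0)
    (hdiag : ∀ l, pd l (fun y => g y a a) x = 0) (hvol : pd a (fun y => (g y).det) x = 0) :
    covDivUp g (fun y => c • (single a a 1 - s • (g y)⁻¹)) i x = 0 := by
  have hinv := differentiableAt_inv_apply hg hdet.ne'
  have hsinv (j k : Fin 3) : DifferentiableAt ℝ (fun y => (s • (g y)⁻¹) j k) x :=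
    (hinv j k).const_mul s
  have hsingle (j k : Fin 3) : DifferentiableAt ℝ (fun _ : V3 => single a a (1 : ℝ) j k) x :=
    differentiableAt_const _
  have hdiff (j k : Fin 3) :
      DifferentiableAt ℝ (fun y => (single a a 1 - s • (g y)⁻¹ : Matrix _ _ ℝ) j k) x :=
    (hsingle j k).fun_sub (hsinv j k)
  rw [covDivUp_const_smul i c hg hdet.ne' hdiff,
    covDivUp_sub i hg hdet.ne' hsingle hsinv, covDivUp_const_smul i s hg hdet.ne' hinv,
    covDivUp_single_self i hg hdet.ne' hsymm hrow hdiag hvol, covDivUp_inv i hg hdet hsymm]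
  ring

end CovariantDivergence

theorem sum_mul_smul_single_sub_smul_inv {n K : Type*} [Fintype n] [DecidableEq n] [Field K]
    {A : Matrix n n K} (hsymm : A.IsSymm) (hdet : A.det ≠ 0) (a : n) (c s : K) :
    ∑ i, ∑ j, A i j * (c • (single a a 1 - s • A⁻¹) : Matrix n n K) i j
      = c * (A a a - s * Fintype.card n) := by
  have htrace (B : Matrix n n K) : ∑ i, ∑ j, A i j * B i j = (A * Bᵀ).trace := rfl
  rw [htrace, transpose_smul, transpose_sub, transpose_smul, transpose_single, hsymm.inv.eq,
    Matrix.mul_smul, Matrix.mul_sub, Matrix.mul_smul, mul_nonsing_inv A hdet.isUnit]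
  simp [trace_mul_single]

/-- The metric `(dz + p dx¹ + q dx²)² + h_{ab} dxᵃ dxᵇ` at a point, for the matrix `h` and the shift
components `p`, `q`; the coordinate `z` has index `2`. -/
def shiftMetric {R : Type*} [CommRing R] (h : Matrix (Fin 2) (Fin 2) R) (p q : R) :
    Matrix (Fin 3) (Fin 3) R :=
  !![h 0 0 + p * p, h 0 1 + p * q, p;
     h 1 0 + q * p, h 1 1 + q * q, q;
     p, q, 1]

theorem det_shiftMetric {R : Type*} [CommRing R] (h : Matrix (Fin 2) (Fin 2) R) (p q : R) :
    (shiftMetric h p q).det = h.det := by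
  simp only [shiftMetric, det_fin_two, det_fin_three, of_apply, cons_val', cons_val_zero,
    cons_val_one, cons_val_fin_one, cons_val]
  ring

theorem isSymm_shiftMetric {R : Type*} [CommRing R] {h : Matrix (Fin 2) (Fin 2) R}
    (hh : h.IsSymm) (p q : R) : (shiftMetric h p q).IsSymm := by
  refine IsSymm.ext fun i j => ?_
  fin_cases i <;> fin_cases j <;> simp [shiftMetric, hh.apply 0 1, mul_comm]

theorem differentiableAt_shiftMetric_apply {h : V3 → Matrix (Fin 2) (Fin 2) ℝ} {p q : V3 → ℝ}
    {x : V3} (hh : ∀ a b, DifferentiableAt ℝ (fun y => h y a b) x) (hp : DifferentiableAt ℝ p x)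
    (hq : DifferentiableAt ℝ q x) (i j : Fin 3) :
    DifferentiableAt ℝ (fun y => shiftMetric (h y) (p y) (q y) i j) x := by
  fin_cases i <;> fin_cases j
  exacts [(hh 0 0).add (hp.mul hp), (hh 0 1).add (hp.mul hq), hp,
    (hh 1 0).add (hq.mul hp), (hh 1 1).add (hq.mul hq), hq, hp, hq, differentiableAt_const 1]

theorem momentum_constraint_corollary32_general
    (U : Set V3) (hU : IsOpen U)
    (h : V3 → Matrix (Fin 2) (Fin 2) ℝ) (β₁ β₂ : V3 → ℝ) (c : ℝ)
    (hh_diff : ∀ a b, DifferentiableOn ℝ (fun x => h x a b) U)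
    (hh_symm : ∀ x ∈ U, (h x).IsSymm) (hh_det_pos : ∀ x ∈ U, 0 < (h x).det)
    (hh_det : ∀ x ∈ U, pd 2 (fun y => (h y).det) x = 0)
    (hβ₁_diff : DifferentiableOn ℝ β₁ U) (hβ₂_diff : DifferentiableOn ℝ β₂ U)
    (hβ₁_ind : ∀ x ∈ U, pd 2 β₁ x = 0) (hβ₂_ind : ∀ x ∈ U, pd 2 β₂ x = 0) :
    let g : V3 → Matrix (Fin 3) (Fin 3) ℝ := fun x => shiftMetric (h x) (β₁ x) (β₂ x)
    let T : V3 → Matrix (Fin 3) (Fin 3) ℝ := fun x =>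
      Matrix.of fun i j =>
        c * ((if i = 2 ∧ j = 2 then 1 else 0) - (1 / 3) * (g x)⁻¹ i j)
    (∀ x ∈ U, ∑ i, ∑ j, g x i j * T x i j = 0) ∧
    (∀ i, ∀ x ∈ U, covDivUp g T i x = 0) := by
  intro g T
  have hT : T = fun y => c • (single 2 2 1 - (1 / 3 : ℝ) • (g y)⁻¹) := by
    ext y i j
    simp [T, single_apply, eq_comm]
  have hsymm (x) (hx : x ∈ U) : (g x).IsSymm := isSymm_shiftMetric (hh_symm x hx) _ _
  have hdet (x : V3) : (g x).det = (h x).det := det_shiftMetric _ _ _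
  have hpos (x) (hx : x ∈ U) : 0 < (g x).det := hdet x ▸ hh_det_pos x hx
  refine ⟨fun x hx => ?_, fun i x hx => ?_⟩
  · rw [hT, sum_mul_smul_single_sub_smul_inv (hsymm x hx) (hpos x hx).ne']
    simp [g, shiftMetric]
  · have hxU : U ∈ 𝓝 x := hU.mem_nhds hx
    rw [hT]
    refine covDivUp_smul_single_sub_smul_inv i c (1 / 3)
      (differentiableAt_shiftMetric_apply (fun a b => (hh_diff a b).differentiableAt hxU)
        (hβ₁_diff.differentiableAt hxU) (hβ₂_diff.differentiableAt hxU))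
      (hpos x hx) (Filter.mem_of_superset hxU hsymm) (fun l => ?_) (fun l => ?_) ?_
    · fin_cases l
      exacts [hβ₁_ind x hx, hβ₂_ind x hx, pd_const 2 1 x]
    · exact pd_const l 1 x
    · simpa only [hdet] using hh_det x hx

/-- **Corollary 3.2**: for the metric `g = (dz + β₁dx¹ + β₂dx²)² + h_{ab} dx^a dx^b` with
`β₁, β₂` independent of `z = x³` and `∂_z det(h_{ab}) = 0`, the tensor
`T^{ij} = c (δ^i_z δ^j_z - (1/3) g^{ij})` is trace-free and satisfies the momentum
constraint `∇_j T^{ij} = 0`. -/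
theorem momentum_constraint_corollary32
    (U : Set V3) (hU : IsOpen U)
    (h : V3 → Matrix (Fin 2) (Fin 2) ℝ) (β₁ β₂ : V3 → ℝ) (c : ℝ)
    (hh_smooth : ∀ a b, ContDiffOn ℝ (⊤ : ℕ∞) (fun x => h x a b) U)
    (hh_pos : ∀ x ∈ U, (h x).PosDef)
    (hh_det : ∀ x ∈ U, pd 2 (fun y => (h y).det) x = 0)
    (hβ₁_smooth : ContDiffOn ℝ (⊤ : ℕ∞) β₁ U)
    (hβ₂_smooth : ContDiffOn ℝ (⊤ : ℕ∞) β₂ U)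
    (hβ₁_ind : ∀ x t, β₁ (Function.update x 2 t) = β₁ x)
    (hβ₂_ind : ∀ x t, β₂ (Function.update x 2 t) = β₂ x) :
    let g : V3 → Matrix (Fin 3) (Fin 3) ℝ := fun x =>
      !![h x 0 0 + β₁ x * β₁ x, h x 0 1 + β₁ x * β₂ x, β₁ x;
         h x 1 0 + β₂ x * β₁ x, h x 1 1 + β₂ x * β₂ x, β₂ x;
         β₁ x, β₂ x, 1]
    let T : V3 → Matrix (Fin 3) (Fin 3) ℝ := fun x =>
      Matrix.of fun i j =>
        c * ((if i = 2 ∧ j = 2 then 1 else 0) - (1 / 3) * (g x)⁻¹ i j)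
    (∀ x ∈ U, ∑ i, ∑ j, g x i j * T x i j = 0) ∧
    (∀ i, ∀ x ∈ U, covDivUp g T i x = 0) := by
  have hdiff {f : V3 → ℝ} (hf : ContDiffOn ℝ (⊤ : ℕ∞) f U) := hf.differentiableOn (by simp)
  have hpd {β : V3 → ℝ} (hβ : ContDiffOn ℝ (⊤ : ℕ∞) β U)
      (hind : ∀ x t, β (Function.update x 2 t) = β x) (x) (hx : x ∈ U) : pd 2 β x = 0 :=
    pd_eq_zero_of_update_eq ((hdiff hβ).differentiableAt (hU.mem_nhds hx)) (hind x)
  exact momentum_constraint_corollary32_general U hU h β₁ β₂ c (fun a b => hdiff (hh_smooth a b))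
    (fun x hx => isHermitian_iff_isSymm.1 (hh_pos x hx).isHermitian)
    (fun x hx => (hh_pos x hx).det_pos) hh_det (hdiff hβ₁_smooth) (hdiff hβ₂_smooth)
    (hpd hβ₁_smooth hβ₁_ind) (hpd hβ₂_smooth hβ₂_ind)
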